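/- arXiv:2405.15449 — 3 statements merged into one kernel-verified Lean document; each statement's English description precedes it below -/
import Mathlib

section
/- Let G be a finite simple graph with maximum degree Δ, and let ψ be a proper partial (Δ+1)-edge coloring of G whose set of colored edges is F ⊆ E(G). Then for any edge e ∈ E(G) \ F, there exists a proper partial (Δ+1)-edge coloring ψ' of G whose set of colored edges is F ∪ {e}. (Consequently any proper partial (Δ+1)-edge coloring can be extended one edge at a time to a full (Δ+1)-edge coloring.) -/
/-!
The proof is Vizing's fan argument. Write `e = s(x, y₀)` and choose for each vertex `v` a color
`m v` missing at `v`; one exists because `deg v ≤ Δ < Δ + 1`. Starting from `y₀`, let `y (i + 1)` be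
the neighbor of `x` along the edge colored `m (y i)`, and stop at the first `k` for which `m (y k)`
is missing at `x` or equals some earlier `m (y j)`. The vertices `y 0, …, y k` are then distinct.

If a color is missing at both `x` and the last vertex of a fan, the colors of the fan can be rotated
and the final edge colored (`Vizing.rotate`). This settles the first alternative. In the second one,
let `β = m (y j) = m (y k)` and let `a` be a color missing at `x`. In the graph of edges colored `a`
or `β` all degrees are at most two, and `x`, `y j`, `y k` have degree at most one, so they do not
all lie in one component (`Vizing.kempe_three`). Swapping `a` and `β` on the component of `x` makes
`β` missing at `x`. If `y j` is outside that component, `y 0, …, y j` is still a fan and `β` is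
missing at `y j`; otherwise `y k` is outside it, `y 0, …, y k` is still a fan (the edge to
`y (j + 1)` and the color missing at `y j` both become `a`), and `β` is missing at `y k`. Either way
the fan can be rotated.
-/

/-- A proper partial edge coloring of `G`: every colored edge is an edge of `G`, and any two
distinct edges of `G` sharing an endpoint do not receive the same color. -/
def IsProperPartial {V : Type*} (G : SimpleGraph V) {C : Type*}
    (ψ : Sym2 V → Option C) : Prop :=
  (∀ e, ψ e ≠ none → e ∈ G.edgeSet) ∧
  ∀ e₁ ∈ G.edgeSet, ∀ e₂ ∈ G.edgeSet, e₁ ≠ e₂ → (∃ v, v ∈ e₁ ∧ v ∈ e₂) →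
    ∀ c, ψ e₁ = some c → ψ e₂ ≠ some c

namespace Vizing

variable {V C : Type*}

/-- Two edges at a common vertex with the same color coincide. Unlike `IsProperPartial`, this does
not refer to an ambient graph. -/
def Proper (ψ : Sym2 V → Option C) : Prop :=
  ∀ a b c z, ψ s(a, b) = some z → ψ s(a, c) = some z → b = c

/-- The color `z` is missing at the vertex `v`. -/
def Free (ψ : Sym2 V → Option C) (v : V) (z : C) : Prop := ∀ w, ψ s(v, w) ≠ some z

/-- Rotation of a fan `y 0, …, y k` at `x`: if some color is missing at both `x` and `y k`, then
the uncolored edge `s(x, y 0)` can be added to the set of colored edges. -/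
lemma rotate (x : V) : ∀ (k : ℕ) (ψ : Sym2 V → Option C) (y : ℕ → V), Proper ψ →
    (∀ i ≤ k, y i ≠ x) → (∀ i ≤ k, ∀ j ≤ k, y i = y j → i = j) → ψ s(x, y 0) = none →
    (∀ i < k, ∃ c, ψ s(x, y (i + 1)) = some c ∧ Free ψ (y i) c) →
    (∃ c, Free ψ x c ∧ Free ψ (y k) c) →
    ∃ ψ' : Sym2 V → Option C, Proper ψ' ∧ ∀ f, ψ' f ≠ none ↔ (ψ f ≠ none ∨ f = s(x, y 0)) := by
  classical
  intro k
  induction k with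
  | zero =>
    rintro ψ y hP hx - h0 - ⟨c, hcx, hcy⟩
    have hx0 := hx 0 le_rfl
    refine ⟨fun f => if f = s(x, y 0) then some c else ψ f, ?_, ?_⟩
    · intro a b d z h1 h2
      have := hP a b d z
      unfold Free at hcx hcy
      simp only [Sym2.eq_iff] at h1 h2
      grind
    · intro f
      by_cases hf : f = s(x, y 0) <;> simp [hf]
  | succ k ih =>
    rintro ψ y hP hx hinj h0 hfan ⟨c, hcx, hcy⟩
    obtain ⟨d, hd1, hd0⟩ := hfan 0 (by omega)
    have hx0 := hx 0 (by omega)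
    have hx1 := hx 1 (by omega)
    have h01 : y 0 ≠ y 1 := fun h => by simpa using hinj 0 (by omega) 1 (by omega) h
    simp only [zero_add] at hd1
    -- One rotation step moves the uncolored edge from `y 0` to `y 1`.
    set φ : Sym2 V → Option C := fun f =>
      if f = s(x, y 0) then some d else if f = s(x, y 1) then none else ψ f with hφ
    have hfree : ∀ i, 1 ≤ i → i ≤ k + 1 → ∀ z, Free ψ (y i) z → Free φ (y i) z := by
      intro i hi hik z hz w
      have := hz w
      have h1 := hx i hik
      have h2 : y i ≠ y 0 := fun h => by have := hinj i hik 0 (by omega) h; omega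
      simp only [hφ, Sym2.eq_iff]
      grind
    have hrec : ∃ ψ' : Sym2 V → Option C, Proper ψ' ∧
        ∀ f, ψ' f ≠ none ↔ (φ f ≠ none ∨ f = s(x, y (0 + 1))) := by
      refine ih φ (fun i => y (i + 1)) ?_ (fun i hi => hx _ (by omega))
        (fun i hi j hj h => by have := hinj _ (by omega) _ (by omega) h; omega) ?_ ?_ ⟨c, ?_, ?_⟩
      · intro a b b' z h1 h2
        have := hP a b b' z
        have e1 := hP x (y 1) b z
        have e2 := hP x (y 1) b' z
        unfold Free at hd0
        simp only [hφ, Sym2.eq_iff] at h1 h2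
        grind
      · have : s(x, y 1) ≠ s(x, y 0) := by simp only [ne_eq, Sym2.eq_iff]; grind
        simp [hφ, this]
      · intro i hi
        obtain ⟨z, hz, hzf⟩ := hfan (i + 1) (by omega)
        refine ⟨z, ?_, hfree _ (by omega) (by omega) z hzf⟩
        have h2 : y (i + 1 + 1) ≠ y 0 := fun h => by
          have := hinj _ (by omega) 0 (by omega) h; omega
        have h3 : y (i + 1 + 1) ≠ y 1 := fun h => by
          have := hinj _ (by omega) 1 (by omega) h; omega
        simp only [hφ, Sym2.eq_iff]
        grind
      · intro w
        have h1 := hcx w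
        have h2 := hcx (y 1)
        simp only [hφ, Sym2.eq_iff]
        grind
      · exact hfree _ (by omega) (by omega) c hcy
    obtain ⟨ψ', hP', hs⟩ := hrec
    refine ⟨ψ', hP', fun f => (hs f).trans ?_⟩
    simp only [hφ, zero_add]
    by_cases hf1 : f = s(x, y 1)
    · subst hf1; simp [hd1]
    · by_cases hf0 : f = s(x, y 0) <;> simp [hf0, hf1]

/-- A finite connected graph with all degrees at most two is a path or a cycle, so it has at most
two vertices of degree at most one. -/
lemma three_ends [Fintype V] (K : SimpleGraph V) [DecidableRel K.Adj] (hK : K.Connected)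
    (h2 : ∀ v, K.degree v ≤ 2) (a b c : V) (hab : a ≠ b) (hac : a ≠ c) (hbc : b ≠ c)
    (ha : K.degree a ≤ 1) (hb : K.degree b ≤ 1) (hc : K.degree c ≤ 1) : False := by
  classical
  have hE := hK.card_vert_le_card_edgeSet_add_one
  have hsum := K.sum_degrees_eq_twice_card_edges
  rw [Nat.card_eq_fintype_card, Nat.card_eq_fintype_card, ← SimpleGraph.edgeFinset_card] at hE
  have hle : ∑ v, (K.degree v + if v ∈ ({a, b, c} : Finset V) then 1 else 0) ≤ ∑ _v : V, 2 := by
    refine Finset.sum_le_sum fun v _ => ?_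
    have := h2 v
    split_ifs with h
    · simp only [Finset.mem_insert, Finset.mem_singleton] at h
      rcases h with rfl | rfl | rfl <;> omega
    · omega
  have hT : ({a, b, c} : Finset V).card = 3 := Finset.card_eq_three.2 ⟨a, b, c, hab, hac, hbc, rfl⟩
  rw [Finset.sum_add_distrib, Finset.sum_ite_mem, Finset.univ_inter] at hle
  simp only [Finset.sum_const, hT, smul_eq_mul, Finset.card_univ] at hle
  omega

/-- The graph of the edges colored `α` or `β`; its components are the Kempe chains. -/
def kempe (ψ : Sym2 V → Option C) (α β : C) : SimpleGraph V where
  Adj u w := u ≠ w ∧ (ψ s(u, w) = some α ∨ ψ s(u, w) = some β)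
  symm := ⟨fun u w h => ⟨h.1.symm, by rw [Sym2.eq_swap]; exact h.2⟩⟩
  loopless := ⟨fun _ h => h.1 rfl⟩

/-- Three distinct vertices, each missing `α` or `β`, do not lie in a single Kempe chain. -/
lemma kempe_three [Fintype V] (ψ : Sym2 V → Option C) (hP : Proper ψ) (α β : C) (a b c : V)
    (hab : a ≠ b) (hac : a ≠ c) (hbc : b ≠ c)
    (ha : Free ψ a α ∨ Free ψ a β) (hb : Free ψ b α ∨ Free ψ b β) (hc : Free ψ c α ∨ Free ψ c β)
    (h1 : (kempe ψ α β).Reachable a b) (h2 : (kempe ψ α β).Reachable a c) : False := by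
  classical
  set H := kempe ψ α β with hH
  set S := H.connectedComponentMk a with hS
  -- The colors at `v` inject the neighbors of `v` into any set containing those colors.
  have key : ∀ (v : S) (T : Finset (Option C)), (∀ w, H.Adj v w → ψ s(v.1, w) ∈ T) →
      S.toSimpleGraph.degree v ≤ T.card := by
    intro v T hT
    rw [← SimpleGraph.card_neighborFinset_eq_degree]
    refine Finset.card_le_card_of_injOn (fun w => ψ s(v.1, w.1)) ?_ ?_
    · intro w hw
      have hw' : S.toSimpleGraph.Adj v w := by simpa using hw
      exact hT _ hw'
    · intro w hw w' hw' h
      have hw2' : S.toSimpleGraph.Adj v w := by simpa using hw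
      have hw2 : H.Adj v w := hw2'
      dsimp only at h
      rcases hw2.2 with h3 | h3
      · exact Subtype.ext (hP _ _ _ _ h3 (h ▸ h3))
      · exact Subtype.ext (hP _ _ _ _ h3 (h ▸ h3))
  have one : ∀ v : S, (Free ψ v α ∨ Free ψ v β) → S.toSimpleGraph.degree v ≤ 1 := by
    rintro v (h | h)
    · refine key v {some β} fun w hw => ?_
      rcases hw.2 with h3 | h3
      · exact absurd h3 (h w)
      · simp [h3]
    · refine key v {some α} fun w hw => ?_
      rcases hw.2 with h3 | h3
      · simp [h3]
      · exact absurd h3 (h w)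
  have hbS : b ∈ S := SimpleGraph.ConnectedComponent.sound h1.symm
  have hcS : c ∈ S := SimpleGraph.ConnectedComponent.sound h2.symm
  refine three_ends S.toSimpleGraph S.connected_toSimpleGraph
    (fun v => (key v {some α, some β} fun w hw => ?_).trans Finset.card_le_two)
    ⟨a, rfl⟩ ⟨b, hbS⟩ ⟨c, hcS⟩ (fun h => hab (congrArg Subtype.val h))
    (fun h => hac (congrArg Subtype.val h)) (fun h => hbc (congrArg Subtype.val h))
    (one _ ha) (one _ hb) (one _ hc)
  rcases hw.2 with h3 | h3 <;> simp [h3]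

/-- Swapping `α` and `β` on a vertex set `S` that is a union of Kempe chains. An edge with exactly
one endpoint in `S` has neither color, so the new color of `s(u, w)` can be read off from the
membership of `u` alone. -/
lemma exists_swap [DecidableEq C] (ψ : Sym2 V → Option C) (α β : C) (S : Set V)
    [DecidablePred (· ∈ S)]
    (hS : ∀ u w, (ψ s(u, w) = some α ∨ ψ s(u, w) = some β) → u ∈ S → w ∈ S) :
    ∃ φ : Sym2 V → Option C, (∀ f, φ f ≠ none ↔ ψ f ≠ none) ∧
      ∀ u w, φ s(u, w) = if u ∈ S then (ψ s(u, w)).map (Equiv.swap α β) else ψ s(u, w) := by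
  classical
  refine ⟨fun f => if ∃ v ∈ f, v ∈ S then (ψ f).map (Equiv.swap α β) else ψ f, ?_, ?_⟩
  · intro f
    dsimp only
    split_ifs <;> simp
  · intro u w
    by_cases hu : u ∈ S
    · simp [hu]
    by_cases hw : w ∈ S
    · have h := hS w u
      rw [Sym2.eq_swap] at h
      have h' : ¬ (ψ s(u, w) = some α ∨ ψ s(u, w) = some β) := fun hc => hu (h hc hw)
      simp only [Sym2.mem_iff, exists_eq_or_imp, exists_eq_left, hu, hw, if_false, or_true, if_true]
      cases hc : ψ s(u, w) with
      | none => rfl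
      | some z =>
        simp only [hc, Option.some.injEq, not_or] at h'
        simp [Equiv.swap_apply_of_ne_of_ne h'.1 h'.2]
    · simp [hu, hw]

/-- Vizing's extension step for colorings in which every vertex misses some color. -/
lemma extend [Fintype V] [Finite C] (ψ : Sym2 V → Option C) (hP : Proper ψ)
    (hloop : ∀ v, ψ s(v, v) = none) (hmiss : ∀ v, ∃ c, Free ψ v c) (x y₀ : V) (hxy : y₀ ≠ x)
    (h0 : ψ s(x, y₀) = none) :
    ∃ ψ' : Sym2 V → Option C, Proper ψ' ∧ ∀ f, ψ' f ≠ none ↔ (ψ f ≠ none ∨ f = s(x, y₀)) := by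
  classical
  choose m hm using hmiss
  have hg : ∀ v, ∃ w, ¬ Free ψ x (m v) → ψ s(x, w) = some (m v) := by
    intro v
    by_cases h : Free ψ x (m v)
    · exact ⟨x, fun h' => absurd h h'⟩
    · unfold Free at h
      push Not at h
      exact ⟨h.choose, fun _ => h.choose_spec⟩
  choose g hg using hg
  set y : ℕ → V := fun n => g^[n] y₀ with hy
  have hysucc : ∀ n, y (n + 1) = g (y n) := fun n => Function.iterate_succ_apply' g n y₀
  have hex : ∃ k, Free ψ x (m (y k)) ∨ ∃ j < k, m (y j) = m (y k) := by
    obtain ⟨i, j, hij, h⟩ := Finite.exists_ne_map_eq_of_infinite (fun n => m (y n))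
    rcases lt_or_gt_of_ne hij with h' | h'
    · exact ⟨j, Or.inr ⟨i, h', h⟩⟩
    · exact ⟨i, Or.inr ⟨j, h', h.symm⟩⟩
  obtain ⟨k, hk, hmin⟩ : ∃ k, (Free ψ x (m (y k)) ∨ ∃ j < k, m (y j) = m (y k)) ∧
      ∀ i < k, ¬ (Free ψ x (m (y i)) ∨ ∃ j < i, m (y j) = m (y i)) :=
    ⟨Nat.find hex, Nat.find_spec hex, fun i hi => Nat.find_min hex hi⟩
  have hcol : ∀ i < k, ψ s(x, y (i + 1)) = some (m (y i)) := fun i hi => by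
    rw [hysucc]; exact hg _ fun h => hmin i hi (Or.inl h)
  have hmne : ∀ i < k, ∀ j < k, m (y i) = m (y j) → i = j := by
    intro i hi j hj h
    rcases lt_trichotomy i j with h' | h' | h'
    · exact absurd (Or.inr ⟨i, h', h⟩) (hmin j hj)
    · exact h'
    · exact absurd (Or.inr ⟨j, h', h.symm⟩) (hmin i hi)
  have hyx : ∀ i ≤ k, y i ≠ x := by
    rintro (_ | i) hi h
    · exact hxy h
    · have := hcol i (by omega)
      rw [h, hloop] at this
      simp at this
  have hinj : ∀ i ≤ k, ∀ j ≤ k, y i = y j → i = j := by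
    have hz : ∀ i < k, y (i + 1) ≠ y 0 := by
      intro i hi h
      have h1 := hcol i hi
      rw [h] at h1
      exact absurd (h0.symm.trans h1) (by simp)
    rintro (_ | i) hi (_ | j) hj h
    · rfl
    · exact absurd h.symm (hz j (by omega))
    · exact absurd h (hz i (by omega))
    · have h1 := hcol i (by omega)
      rw [h, hcol j (by omega)] at h1
      rw [hmne j (by omega) i (by omega) (Option.some.inj h1)]
  rcases hk with hk | ⟨j, hj, hjk⟩
  · exact rotate x k ψ y hP hyx hinj h0 (fun i hi => ⟨_, hcol i hi, hm _⟩) ⟨_, hk, hm _⟩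
  set β := m (y k) with hβ
  set a := m x with ha
  have hax : Free ψ x a := hm x
  have hma : ∀ i < k, m (y i) ≠ a := fun i hi h => hax _ (h ▸ hcol i hi)
  set S : Set V := {w | (kempe ψ a β).Reachable x w} with hS
  have hxS : x ∈ S := SimpleGraph.Reachable.refl x
  obtain ⟨φ, hsupp, hφ⟩ := exists_swap ψ a β S (by
    intro u w h hu
    refine SimpleGraph.Reachable.trans hu (SimpleGraph.Adj.reachable ⟨?_, h⟩)
    rintro rfl
    simp [hloop] at h)
  have hPφ : Proper φ := by
    intro u w w' z h1 h2
    rw [hφ] at h1 h2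
    split_ifs at h1 h2 with hu
    · obtain ⟨z1, hz1, hz1'⟩ := Option.map_eq_some_iff.1 h1
      obtain ⟨z2, hz2, hz2'⟩ := Option.map_eq_some_iff.1 h2
      have : z1 = z2 := (Equiv.swap a β).injective (hz1'.trans hz2'.symm)
      exact hP u w w' z1 hz1 (this ▸ hz2)
    · exact hP u w w' z h1 h2
  have hin : ∀ u ∈ S, ∀ z, Free ψ u z → Free φ u (Equiv.swap a β z) := by
    intro u hu z hz w h
    rw [hφ, if_pos hu] at h
    obtain ⟨z1, hz1, hz1'⟩ := Option.map_eq_some_iff.1 h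
    exact hz w ((Equiv.swap a β).injective hz1' ▸ hz1)
  have hout : ∀ u ∉ S, ∀ z, Free ψ u z → Free φ u z := by
    intro u hu z hz w h
    rw [hφ, if_neg hu] at h
    exact hz w h
  have hxβ : Free φ x β := by simpa using hin x hxS a hax
  have h0φ : φ s(x, y 0) = none := by
    rw [hφ, if_pos hxS]; simp [hy, h0]
  -- Fan steps other than the `j`-th involve neither `a` nor `β`, so the swap leaves them intact.
  have hfan : ∀ i < k, i ≠ j → ∃ c, φ s(x, y (i + 1)) = some c ∧ Free φ (y i) c := by
    intro i hi hij
    have hne : m (y i) ≠ β := fun h => hij (hmne i hi j hj (h.trans hjk.symm))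
    have hsw : Equiv.swap a β (m (y i)) = m (y i) := Equiv.swap_apply_of_ne_of_ne (hma i hi) hne
    refine ⟨m (y i), ?_, ?_⟩
    · rw [hφ, if_pos hxS, hcol i hi]; simp [hsw]
    · by_cases hu : y i ∈ S
      · simpa [hsw] using hin _ hu _ (hm (y i))
      · exact hout _ hu _ (hm (y i))
  have hfin : ∃ ψ' : Sym2 V → Option C, Proper ψ' ∧
      ∀ f, ψ' f ≠ none ↔ (φ f ≠ none ∨ f = s(x, y 0)) := by
    by_cases hjS : y j ∈ S
    · have hkS : y k ∉ S := fun hkS =>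
        kempe_three ψ hP a β x (y j) (y k) (hyx j hj.le).symm (hyx k le_rfl).symm
          (fun h => hj.ne (hinj j hj.le k le_rfl h)) (Or.inl hax) (Or.inr (hjk ▸ hm (y j)))
          (Or.inr (hm (y k))) hjS hkS
      refine rotate x k φ y hPφ hyx hinj h0φ (fun i hi => ?_) ⟨β, hxβ, hout _ hkS _ (hm _)⟩
      by_cases hij : i = j
      · subst hij
        refine ⟨a, ?_, ?_⟩
        · rw [hφ, if_pos hxS, hcol i hi, hjk]; simp
        · have := hin _ hjS _ (hm (y i))
          rwa [hjk, Equiv.swap_apply_right] at this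
      · exact hfan i hi hij
    · exact rotate x j φ y hPφ (fun i hi => hyx i (by omega))
        (fun i hi i' hi' => hinj i (by omega) i' (by omega)) h0φ
        (fun i hi => hfan i (by omega) (by omega)) ⟨β, hxβ, hout _ hjS _ (hjk ▸ hm (y j))⟩
  obtain ⟨ψ', h1, h2⟩ := hfin
  exact ⟨ψ', h1, fun f => (h2 f).trans (or_congr_left (hsupp f))⟩

end Vizing

/-- Any proper partial `(Δ+1)`-edge coloring of a simple graph `G` with maximum degree `Δ`
can be extended by one more edge: for any uncolored edge `e` of `G`, there is a proper
partial `(Δ+1)`-edge coloring whose set of colored edges is the old one together with `e`. -/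
theorem extend_partial_coloring_by_one_edge {V : Type*} [Fintype V] (G : SimpleGraph V)
    [DecidableRel G.Adj] (Δ : ℕ) (hΔ : G.maxDegree ≤ Δ)
    (ψ : Sym2 V → Option (Fin (Δ + 1))) (hψ : IsProperPartial G ψ)
    (e : Sym2 V) (he : e ∈ G.edgeSet) (hue : ψ e = none) :
    ∃ ψ' : Sym2 V → Option (Fin (Δ + 1)), IsProperPartial G ψ' ∧
      ∀ f, ψ' f ≠ none ↔ (ψ f ≠ none ∨ f = e) := by
  classical
  obtain ⟨hE, hprop⟩ := hψ
  have hP : Vizing.Proper ψ := by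
    intro a b c z h1 h2
    by_contra hbc
    refine hprop _ (hE _ (by simp [h1])) _ (hE _ (by simp [h2])) ?_ ⟨a, by simp, by simp⟩ z h1 h2
    exact fun h => hbc (Sym2.congr_right.1 h)
  have hloop : ∀ v, ψ s(v, v) = none := by
    intro v
    by_contra h
    have := hE _ h
    simp at this
  have hmiss : ∀ v, ∃ c, Vizing.Free ψ v c := by
    intro v
    by_contra h
    unfold Vizing.Free at h
    push Not at h
    choose w hw using h
    have hle : (Finset.univ : Finset (Fin (Δ + 1))).card ≤ (G.neighborFinset v).card := by
      refine Finset.card_le_card_of_injOn w ?_ ?_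
      · intro c _
        have : s(v, w c) ∈ G.edgeSet := hE _ (by simp [hw c])
        simpa using this
      · intro c _ c' _ h
        have h1 := hw c
        rw [h, hw c'] at h1
        exact (Option.some.inj h1).symm
    rw [Finset.card_univ, Fintype.card_fin, SimpleGraph.card_neighborFinset_eq_degree] at hle
    have := G.degree_le_maxDegree v
    omega
  induction e using Sym2.ind with
  | _ x y =>
    have hadj : G.Adj x y := he
    obtain ⟨ψ', hP', hs⟩ := Vizing.extend ψ hP hloop hmiss x y hadj.ne' hue
    refine ⟨ψ', ⟨fun f hf => ?_, ?_⟩, hs⟩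
    · rcases (hs f).1 hf with h | h
      · exact hE f h
      · exact h ▸ he
    · rintro e₁ - e₂ - hne ⟨v, h1, h2⟩ c hc1 hc2
      obtain ⟨b, rfl⟩ := Sym2.mem_iff_exists.1 h1
      obtain ⟨d, rfl⟩ := Sym2.mem_iff_exists.1 h2
      exact hne (by rw [hP' v b d c hc1 hc2])
end

section
/- Let ψ be a proper partial edge coloring of a simple graph G, let x, y be two distinct colors, and let P be a maximal {x,y}-alternating path in G. Define ψ' to agree with ψ on every edge not on P, and on each edge of P to exchange the colors x and y (edges of P colored x get color y and vice versa). Then ψ' is again a proper partial edge coloring of G with the same set of colored edges, and for each endpoint v of P the missing sets satisfy: if exactly one of x, y was missing at v under ψ, then the other one of x, y is missing at v under ψ'. The missing sets of all vertices not an endpoint of P are unchanged. -/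
/-- An `{x,y}`-alternating path: a simple path all of whose edges are colored `x` or `y`. -/
def IsAltPath {V C : Type*} (G : SimpleGraph V) (ψ : Sym2 V → Option C) (x y : C)
    {a b : V} (p : G.Walk a b) : Prop :=
  p.IsPath ∧ ∀ e ∈ p.edges, ψ e = some x ∨ ψ e = some y

/-- A maximal `{x,y}`-alternating path. -/
def IsMaxAltPath {V C : Type*} (G : SimpleGraph V) (ψ : Sym2 V → Option C) (x y : C)
    {a b : V} (p : G.Walk a b) : Prop :=
  IsAltPath G ψ x y p ∧
  (∀ w, G.Adj a w → (ψ s(a, w) = some x ∨ ψ s(a, w) = some y) → s(a, w) ∈ p.edges) ∧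
  (∀ w, G.Adj b w → (ψ s(b, w) = some x ∨ ψ s(b, w) = some y) → s(b, w) ∈ p.edges)

/-- The color `c` is missing at the vertex `v` under `ψ`. -/
def MissingAt {V C : Type*} (G : SimpleGraph V) (ψ : Sym2 V → Option C) (c : C)
    (v : V) : Prop :=
  ∀ w, G.Adj v w → ψ s(v, w) ≠ some c

open SimpleGraph

theorem exists_two_edges_of_interior {V : Type*} {G : SimpleGraph V} {a b : V}
    (p : G.Walk a b) (hp : p.IsPath) (v : V) (hv : v ∈ p.support) (ha : v ≠ a) (hb : v ≠ b) :
    ∃ u w, u ≠ w ∧ s(v, u) ∈ p.edges ∧ s(v, w) ∈ p.edges := by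
  induction p with
  | nil => simp at hv; exact absurd hv ha
  | @cons a c b h q ih =>
    rw [Walk.cons_isPath_iff] at hp
    rw [Walk.support_cons, List.mem_cons] at hv
    have hvq : v ∈ q.support := hv.resolve_left ha
    by_cases hvc : v = c
    · subst hvc
      cases q with
      | nil => exact absurd rfl hb
      | @cons _ w _ h' q' =>
        refine ⟨a, w, ?_, ?_, ?_⟩
        · rintro rfl
          exact hp.2 (by simp)
        · simp [Sym2.eq_swap]
        · simp
    · obtain ⟨u, w, huw, hu, hw⟩ := ih hp.1 hvq hvc hb
      exact ⟨u, w, huw, by simp [hu], by simp [hw]⟩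

/-- At an interior vertex of an alternating path both colors occur on path edges, since the two
path edges there have distinct colors by properness. -/
theorem exists_colored_edges_of_interior {V C : Type*} {G : SimpleGraph V} {ψ : Sym2 V → Option C}
    (hψ : IsProperPartial G ψ) {x y : C} {a b : V} {p : G.Walk a b}
    (hp : IsAltPath G ψ x y p) {v : V} (hv : v ∈ p.support) (ha : v ≠ a) (hb : v ≠ b) :
    (∃ u, s(v, u) ∈ p.edges ∧ ψ s(v, u) = some x) ∧
      (∃ u, s(v, u) ∈ p.edges ∧ ψ s(v, u) = some y) := by
  obtain ⟨u, w, huw, hu, hw⟩ := exists_two_edges_of_interior p hp.1 v hv ha hb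
  have hne : s(v, u) ≠ s(v, w) := fun h => huw (Sym2.congr_right.1 h)
  have hprop := hψ.2 _ (p.edges_subset_edgeSet hu) _ (p.edges_subset_edgeSet hw) hne
    ⟨v, by simp, by simp⟩
  rcases hp.2 _ hu with h1 | h1 <;> rcases hp.2 _ hw with h2 | h2
  · exact absurd h2 (hprop _ h1)
  · exact ⟨⟨u, hu, h1⟩, ⟨w, hw, h2⟩⟩
  · exact ⟨⟨w, hw, h2⟩, ⟨u, hu, h1⟩⟩
  · exact absurd h2 (hprop _ h1)

/-- A maximal alternating path contains every `x`- or `y`-colored edge at each of its vertices,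
interior vertices included. -/
theorem edge_mem_of_mem_support {V C : Type*} {G : SimpleGraph V} {ψ : Sym2 V → Option C}
    (hψ : IsProperPartial G ψ) {x y : C} {a b : V} {p : G.Walk a b}
    (hp : IsMaxAltPath G ψ x y p) {v w : V} (hv : v ∈ p.support) (hvw : G.Adj v w)
    (hc : ψ s(v, w) = some x ∨ ψ s(v, w) = some y) : s(v, w) ∈ p.edges := by
  by_cases ha : v = a
  · subst ha; exact hp.2.1 w hvw hc
  by_cases hb : v = b
  · subst hb; exact hp.2.2 w hvw hc
  obtain ⟨⟨u, hu, hux⟩, ⟨t, ht, hty⟩⟩ := exists_colored_edges_of_interior hψ hp.1 hv ha hb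
  have key : ∀ z c, s(v, z) ∈ p.edges → ψ s(v, z) = some c → ψ s(v, w) = some c →
      s(v, w) ∈ p.edges := by
    intro z c hz hzc hwc
    by_contra hn
    exact hψ.2 _ (p.edges_subset_edgeSet hz) s(v, w) hvw (fun h => hn (h ▸ hz))
      ⟨v, by simp, by simp⟩ c hzc hwc
  rcases hc with hc | hc
  · exact key u x hu hux hc
  · exact key t y ht hty hc

/-- At a vertex of the path, the flip transposes `x` and `y` on every edge, whether or not that
edge lies on the path. -/
theorem flip_local {V C : Type*} [DecidableEq V] [DecidableEq C]
    {G : SimpleGraph V} {ψ : Sym2 V → Option C} (hψ : IsProperPartial G ψ)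
    {x y : C} {a b : V} {p : G.Walk a b} (hp : IsMaxAltPath G ψ x y p)
    {ψ' : Sym2 V → Option C}
    (hψ' : ∀ e, ψ' e = if e ∈ p.edges then
        (if ψ e = some x then some y else if ψ e = some y then some x else ψ e)
      else ψ e) {v w : V} (hv : v ∈ p.support) (hvw : G.Adj v w) :
    ψ' s(v, w) = (ψ s(v, w)).map (Equiv.swap x y) := by
  have hmem := edge_mem_of_mem_support hψ hp hv hvw
  rw [hψ']
  cases h : ψ s(v, w) with
  | none => simp
  | some c =>
    by_cases hx : c = x
    · subst hx; simp [hmem (Or.inl h)]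
    by_cases hy : c = y
    · subst hy; simp [hmem (Or.inr h), hx]
    simp [hx, hy, Equiv.swap_apply_of_ne_of_ne]

/-- **Correctness of the flip operation.** Let `P` be a maximal `{x,y}`-alternating path
from `a` to `b` and let `ψ'` agree with `ψ` off `P` and exchange the colors `x` and `y` on
the edges of `P`.  Then `ψ'` is again a proper partial edge coloring with the same set of
colored edges; for each endpoint, if exactly one of `x, y` was missing under `ψ`, then the
other one is missing under `ψ'`; and the missing sets of all non-endpoint vertices are
unchanged. -/
theorem flip_alt_path_correct {V C : Type*} [DecidableEq V] [DecidableEq C]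
    (G : SimpleGraph V) (ψ : Sym2 V → Option C) (hψ : IsProperPartial G ψ)
    (x y : C) (hxy : x ≠ y) {a b : V} (p : G.Walk a b) (hp : IsMaxAltPath G ψ x y p)
    (ψ' : Sym2 V → Option C)
    (hψ' : ∀ e, ψ' e = if e ∈ p.edges then
        (if ψ e = some x then some y else if ψ e = some y then some x else ψ e)
      else ψ e) :
    IsProperPartial G ψ' ∧
    (∀ e, ψ' e = none ↔ ψ e = none) ∧
    (∀ v, v = a ∨ v = b →
      ((MissingAt G ψ x v ∧ ¬ MissingAt G ψ y v) → MissingAt G ψ' y v) ∧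
      ((MissingAt G ψ y v ∧ ¬ MissingAt G ψ x v) → MissingAt G ψ' x v)) ∧
    (∀ v, v ≠ a → v ≠ b → ∀ c, MissingAt G ψ' c v ↔ MissingAt G ψ c v) := by
  have hoff : ∀ v w, v ∉ p.support → ψ' s(v, w) = ψ s(v, w) := by
    intro v w hv
    rw [hψ', if_neg fun h => hv (p.fst_mem_support_of_mem_edges h)]
  have hnone : ∀ e, ψ' e = none ↔ ψ e = none := by
    intro e
    rw [hψ']
    split_ifs <;> simp_all
  have hmiss : ∀ v ∈ p.support, ∀ c,
      MissingAt G ψ' c v ↔ MissingAt G ψ (Equiv.swap x y c) v := by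
    intro v hv c
    refine forall_congr' fun w => forall_congr' fun hvw => ?_
    rw [flip_local hψ hp hψ' hv hvw, Ne, Ne, Option.map_eq_some_iff]
    simp only [Equiv.swap_apply_eq_iff, exists_eq_right]
  refine ⟨⟨fun e he => hψ.1 e (mt (hnone e).2 he), ?_⟩, hnone, ?_, ?_⟩
  · rintro e₁ he₁ e₂ he₂ hne ⟨v, hv₁, hv₂⟩ c h₁ h₂
    obtain ⟨u, rfl⟩ := Sym2.mem_iff_exists.1 hv₁
    obtain ⟨w, rfl⟩ := Sym2.mem_iff_exists.1 hv₂
    have hprop := hψ.2 _ he₁ _ he₂ hne ⟨v, hv₁, hv₂⟩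
    by_cases hv : v ∈ p.support
    · rw [flip_local hψ hp hψ' hv he₁, Option.map_eq_some_iff] at h₁
      rw [flip_local hψ hp hψ' hv he₂, Option.map_eq_some_iff] at h₂
      obtain ⟨d, hd, hdc⟩ := h₁
      obtain ⟨d', hd', hdc'⟩ := h₂
      obtain rfl := (Equiv.swap x y).injective (hdc.trans hdc'.symm)
      exact hprop d hd hd'
    · rw [hoff v _ hv] at h₁ h₂
      exact hprop c h₁ h₂
  · intro v hv
    have hvs : v ∈ p.support := by
      rcases hv with rfl | rfl <;> simp
    constructor
    · rintro ⟨h, -⟩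
      rwa [hmiss v hvs, Equiv.swap_apply_right]
    · rintro ⟨h, -⟩
      rwa [hmiss v hvs, Equiv.swap_apply_left]
  · intro v ha hb c
    by_cases hv : v ∈ p.support
    · rw [hmiss v hv]
      obtain ⟨⟨u, hu, hux⟩, ⟨t, ht, hty⟩⟩ := exists_colored_edges_of_interior hψ hp.1 hv ha hb
      have hnx : ¬ MissingAt G ψ x v := fun h => h u (p.edges_subset_edgeSet hu) hux
      have hny : ¬ MissingAt G ψ y v := fun h => h t (p.edges_subset_edgeSet ht) hty
      by_cases hx : c = x
      · subst hx; simp [hnx, hny]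
      by_cases hy : c = y
      · subst hy; simp [hnx, hny]
      rw [Equiv.swap_apply_of_ne_of_ne hx hy]
    · refine forall_congr' fun w => ?_
      rw [hoff v w hv]
end

section
/- Let G be a simple graph with maximum degree Δ and ψ a proper partial (Δ+1)-edge coloring of G. Let u be a vertex with distinct neighbors v₀, v₁, …, v_k such that the edge (u, v₀) is uncolored, the edge (u, v_i) is colored for each 1 ≤ i ≤ k, ψ(u, v_i) ∈ miss_ψ(v_{i−1}) for each 1 ≤ i ≤ k, and miss_ψ(u) ∩ miss_ψ(v_k) ≠ ∅. Then there exists a proper partial (Δ+1)-edge coloring ψ' of G whose set of colored edges is the set of edges colored by ψ together with the edge (u, v₀); namely, the rotation ψ'(u, v_i) = ψ(u, v_{i+1}) for 0 ≤ i < k and ψ'(u, v_k) = x for any x ∈ miss_ψ(u) ∩ miss_ψ(v_k), leaving all other edges unchanged, is proper. -/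
/-- **Correctness of the fan-rotation case of Vizing's procedure.** Let `ψ` be a proper
partial `(Δ+1)`-edge coloring of `G` (max degree `≤ Δ`), and let `u` have distinct
neighbors `v 0, v 1, …, v k` with `(u, v 0)` uncolored, `(u, v i)` colored for `1 ≤ i ≤ k`,
`ψ (u, v i) ∈ miss_ψ (v (i-1))` for `1 ≤ i ≤ k`, and some `x ∈ miss_ψ u ∩ miss_ψ (v k)`.
Then the rotation `ψ' (u, v i) := ψ (u, v (i+1))` for `0 ≤ i < k`, `ψ' (u, v k) := x`,
leaving all other edges unchanged, is a proper partial `(Δ+1)`-edge coloring whose set of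
colored edges is that of `ψ` together with the edge `(u, v 0)`. -/
theorem vizing_fan_rotation {V : Type*} [Fintype V] (G : SimpleGraph V)
    [DecidableRel G.Adj] (Δ : ℕ) (hΔ : G.maxDegree ≤ Δ)
    (ψ : Sym2 V → Option (Fin (Δ + 1))) (hψ : IsProperPartial G ψ)
    (u : V) (k : ℕ) (v : Fin (k + 1) → V) (hv : Function.Injective v)
    (hadj : ∀ i, G.Adj u (v i))
    (h0 : ψ s(u, v 0) = none)
    (hcol : ∀ i : Fin k, ψ s(u, v i.succ) ≠ none)
    (hfan : ∀ i : Fin k, ∀ c, ψ s(u, v i.succ) = some c → MissingAt G ψ c (v i.castSucc))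
    (x : Fin (Δ + 1)) (hxu : MissingAt G ψ x u) (hxk : MissingAt G ψ x (v (Fin.last k))) :
    ∃ ψ' : Sym2 V → Option (Fin (Δ + 1)),
      IsProperPartial G ψ' ∧
      (∀ i : Fin k, ψ' s(u, v i.castSucc) = ψ s(u, v i.succ)) ∧
      ψ' s(u, v (Fin.last k)) = some x ∧
      (∀ e, (∀ i, e ≠ s(u, v i)) → ψ' e = ψ e) ∧
      (∀ e, ψ' e ≠ none ↔ (ψ e ≠ none ∨ e = s(u, v 0))) := by
  classical
  obtain ⟨hsupp, hprop⟩ := hψ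
  obtain ⟨col, hcast, hlast⟩ : ∃ col : Fin (k + 1) → Option (Fin (Δ + 1)),
      (∀ i : Fin k, col i.castSucc = ψ s(u, v i.succ)) ∧ col (Fin.last k) = some x :=
    ⟨Fin.lastCases (some x) (fun i => ψ s(u, v i.succ)), by simp, by simp⟩
  have hinj : ∀ i j, s(u, v i) = s(u, v j) → i = j := fun i j h =>
    hv (Sym2.congr_right.mp h)
  have hsome : ∀ i, col i ≠ none := by
    intro i
    induction i using Fin.lastCases with
    | last => simp [hlast]
    | cast i => rw [hcast]; exact hcol i
  have hmiss : ∀ i c, col i = some c → MissingAt G ψ c (v i) := by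
    intro i c h
    induction i using Fin.lastCases with
    | last =>
      rw [hlast] at h
      exact Option.some.inj h ▸ hxk
    | cast i => exact hfan i c (by rw [← hcast, h])
  have hcolinj : ∀ i j c, col i = some c → col j = some c → i = j := by
    intro i j c hi hj
    induction i using Fin.lastCases with
    | last =>
      induction j using Fin.lastCases with
      | last => rfl
      | cast j =>
        rw [hlast] at hi
        rw [hcast, ← hi] at hj
        exact absurd hj (hxu _ (hadj _))
    | cast i =>
      induction j using Fin.lastCases with
      | last =>
        rw [hlast] at hj
        rw [hcast, ← hj] at hi
        exact absurd hi (hxu _ (hadj _))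
      | cast j =>
        rw [hcast] at hi hj
        by_contra hne
        refine hprop s(u, v i.succ) (hadj _) s(u, v j.succ) (hadj _) (fun h => hne ?_)
          ⟨u, by simp, by simp⟩ c hi hj
        rw [Fin.succ_injective _ (hinj _ _ h)]
  have hout : ∀ i c w, G.Adj u w → (∀ j, s(u, w) ≠ s(u, v j)) → col i = some c →
      ψ s(u, w) ≠ some c := by
    intro i c w hw hne h hc
    induction i using Fin.lastCases with
    | last =>
      rw [hlast] at h
      exact hxu w hw (by rw [hc, h])
    | cast i =>
      rw [hcast] at h
      exact hprop _ hw s(u, v i.succ) (hadj _) (hne _) ⟨u, by simp, by simp⟩ c hc h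
  obtain ⟨ψ', hin, hoth⟩ : ∃ ψ' : Sym2 V → Option (Fin (Δ + 1)),
      (∀ i, ψ' s(u, v i) = col i) ∧ ∀ e, (∀ i, e ≠ s(u, v i)) → ψ' e = ψ e := by
    refine ⟨fun e => if h : ∃ i, e = s(u, v i) then col h.choose else ψ e, fun i => ?_,
      fun e he => ?_⟩
    · have h : ∃ j, s(u, v i) = s(u, v j) := ⟨i, rfl⟩
      simp only [dif_pos h]
      rw [← hinj _ _ h.choose_spec]
    · exact dif_neg (by push Not; exact he)
  -- A fan edge and an edge outside the fan sharing a vertex `w`, which is either `u` or `v i`.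
  have hmixed : ∀ i, ∀ e ∈ G.edgeSet, (∀ j, e ≠ s(u, v j)) → ∀ w, w ∈ s(u, v i) → w ∈ e →
      ∀ c, col i = some c → ψ e ≠ some c := by
    intro i e he hne w hw hwe c hc
    obtain ⟨z, rfl⟩ := hwe
    rcases Sym2.mem_iff.mp hw with rfl | rfl
    · exact hout i c z he hne hc
    · exact hmiss i c hc z he
  refine ⟨ψ', ⟨?_, ?_⟩, fun i => by rw [hin, hcast], by rw [hin, hlast], hoth, ?_⟩
  · intro e he
    by_cases h : ∃ i, e = s(u, v i)
    · obtain ⟨i, rfl⟩ := h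
      exact hadj i
    · push Not at h
      exact hsupp e (hoth e h ▸ he)
  · intro e₁ h₁ e₂ h₂ hne ⟨w, hw₁, hw₂⟩ c hc₁ hc₂
    by_cases f₁ : ∃ i, e₁ = s(u, v i) <;> by_cases f₂ : ∃ i, e₂ = s(u, v i)
    · obtain ⟨i, rfl⟩ := f₁
      obtain ⟨j, rfl⟩ := f₂
      rw [hin] at hc₁ hc₂
      exact hne (by rw [hcolinj i j c hc₁ hc₂])
    · obtain ⟨i, rfl⟩ := f₁
      push Not at f₂
      rw [hin] at hc₁
      rw [hoth _ f₂] at hc₂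
      exact hmixed i e₂ h₂ f₂ w hw₁ hw₂ c hc₁ hc₂
    · obtain ⟨j, rfl⟩ := f₂
      push Not at f₁
      rw [hin] at hc₂
      rw [hoth _ f₁] at hc₁
      exact hmixed j e₁ h₁ f₁ w hw₂ hw₁ c hc₂ hc₁
    · push Not at f₁ f₂
      rw [hoth _ f₁] at hc₁
      rw [hoth _ f₂] at hc₂
      exact hprop e₁ h₁ e₂ h₂ hne ⟨w, hw₁, hw₂⟩ c hc₁ hc₂
  · intro e
    by_cases h : ∃ i, e = s(u, v i)
    · obtain ⟨i, rfl⟩ := h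
      rw [hin]
      refine iff_of_true (hsome i) ?_
      induction i using Fin.cases with
      | zero => exact Or.inr rfl
      | succ i => exact Or.inl (hcol i)
    · push Not at h
      rw [hoth e h]
      simp [h 0]
end
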